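/- arXiv:1512.03732 — 3 statements merged into one kernel-verified Lean document; each statement's English description precedes it below -/
import Mathlib

section
/- Let k ∈ ℕ and let a, b ∈ ℝ with a ≥ 2k and b ≥ 0. Then Σ_{j∈ℕ, j≤k, j ≤ 6ekb/a} binom(a, k−j)·binom(b, j) ≥ (1/2)·binom(a+b, k), where e is Euler's number. -/
open Finset

noncomputable section

/-- Generalized binomial coefficient `binom(x,k) = (1/k!)·∏_{j<k}(x-j)`. -/
noncomputable def gbinom (x : ℝ) (k : ℕ) : ℝ :=
  (∏ j ∈ Finset.range k, (x - j)) / (Nat.factorial k)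

/-!
By Vandermonde's identity the full sum over `j ≤ k` is `gbinom (a + b) k ≥ gbinom a k`, so it is
enough that the terms with `j > L := 6ekb/a` contribute at most `gbinom a k / 2`.

For `j ≤ b + 1` both factors are controlled by their sizes: since `2k ≤ a`, lowering the index by
one costs a factor `2k/a`, and `gbinom b j ≤ b ^ j / j! ≤ (eb/j) ^ j`. The `j`-th term is therefore
at most `(2ekb/(aj)) ^ j * gbinom a k ≤ 3⁻ʲ * gbinom a k`, and `∑_{j ≥ 1} 3⁻ʲ = 1/2`.

For `j ≥ b` absolute values are too lossy, but there the terms alternate in sign and decrease in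
modulus, so a block of them lies between `0` and its first term. A block starting at `⌈b⌉ + 1` has a
nonpositive first term; a block starting later has first term at most `gbinom a k / 2`, because
`|gbinom b (j + 1)| ≤ 1/2` for `j ≥ b`.
-/

lemma gbinom_succ (x : ℝ) (n : ℕ) : gbinom x (n + 1) = (x - n) / (n + 1) * gbinom x n := by
  simp only [gbinom, prod_range_succ, Nat.factorial_succ, Nat.cast_mul, Nat.cast_succ]
  field_simp

lemma gbinom_eq_ringChoose (x : ℝ) (n : ℕ) : gbinom x n = Ring.choose x n := by
  rw [gbinom, div_eq_iff (by positivity), mul_comm, ← nsmul_eq_mul,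
    ← Ring.descPochhammer_eq_factorial_smul_choose, ← descPochhammer_eval_eq_prod_range,
    ← Polynomial.aeval_eq_smeval, ← Polynomial.eval_map_algebraMap, descPochhammer_map]

lemma gbinom_add (a b : ℝ) (k : ℕ) :
    gbinom (a + b) k = ∑ j ∈ range (k + 1), gbinom a (k - j) * gbinom b j := by
  simp only [gbinom_eq_ringChoose]
  rw [add_comm, Ring.add_choose_eq k (Commute.all b a), Nat.sum_antidiagonal_eq_sum_range_succ_mk]
  simp only [mul_comm]

lemma gbinom_natCast_self (n : ℕ) : gbinom n n = 1 := by
  rw [gbinom_eq_ringChoose, Ring.choose_natCast, Nat.choose_self, Nat.cast_one]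

lemma natCast_le_of_mem_range {x : ℝ} {n i : ℕ} (hn : (n : ℝ) ≤ x + 1) (hi : i ∈ range n) :
    (i : ℝ) ≤ x := by
  have : (i : ℝ) + 1 ≤ n := by exact_mod_cast mem_range.mp hi
  linarith

lemma gbinom_nonneg {x : ℝ} {n : ℕ} (hn : (n : ℝ) ≤ x + 1) : 0 ≤ gbinom x n :=
  div_nonneg (prod_nonneg fun _ hi => sub_nonneg.mpr (natCast_le_of_mem_range hn hi))
    (by positivity)

lemma gbinom_sub_nonneg {x : ℝ} {n : ℕ} (hn : (n : ℝ) ≤ x + 1) (j : ℕ) : 0 ≤ gbinom x (n - j) :=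
  gbinom_nonneg ((Nat.cast_le.mpr (n.sub_le j)).trans hn)

lemma gbinom_le_gbinom_left {x y : ℝ} {n : ℕ} (hn : (n : ℝ) ≤ x + 1) (hxy : x ≤ y) :
    gbinom x n ≤ gbinom y n := by
  unfold gbinom
  gcongr
  exact fun _ hi => sub_nonneg.mpr (natCast_le_of_mem_range hn hi)

lemma gbinom_le_pow_div_factorial {x : ℝ} {n : ℕ} (hn : (n : ℝ) ≤ x + 1) :
    gbinom x n ≤ x ^ n / n.factorial := by
  have hprod : ∏ j ∈ range n, (x - j) ≤ ∏ _j ∈ range n, x :=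
    prod_le_prod (fun _ hi => sub_nonneg.mpr (natCast_le_of_mem_range hn hi))
      fun j _ => sub_le_self x j.cast_nonneg
  rw [prod_const, card_range] at hprod
  unfold gbinom
  gcongr

lemma gbinom_le_one {x : ℝ} {n : ℕ} (hn : (n : ℝ) ≤ x + 1) (hx : x ≤ n) : gbinom x n ≤ 1 :=
  (gbinom_le_gbinom_left hn hx).trans_eq (gbinom_natCast_self n)

lemma gbinom_le_gbinom_succ {a : ℝ} {n : ℕ} (hn : 2 * (n : ℝ) + 1 ≤ a) :
    gbinom a n ≤ gbinom a (n + 1) := by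
  rw [gbinom_succ]
  refine le_mul_of_one_le_left (gbinom_nonneg (by linarith [n.cast_nonneg (α := ℝ)])) ?_
  rw [one_le_div (by positivity)]
  linarith

-- Truncated subtraction makes the sequence constant from `j = k` on.
lemma antitone_gbinom_sub {a : ℝ} {k : ℕ} (ha : 2 * (k : ℝ) ≤ a + 1) :
    Antitone fun j => gbinom a (k - j) := by
  refine antitone_nat_of_succ_le fun j => ?_
  obtain hkj | hjk := le_or_gt k j
  · simp only [Nat.sub_eq_zero_of_le hkj, Nat.sub_eq_zero_of_le (hkj.trans j.le_succ), le_refl]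
  · obtain ⟨n, rfl⟩ := Nat.exists_eq_add_of_lt hjk
    rw [show j + n + 1 - (j + 1) = n by omega, show j + n + 1 - j = n + 1 by omega]
    push_cast at ha
    exact gbinom_le_gbinom_succ (by linarith [j.cast_nonneg (α := ℝ)])

lemma gbinom_le_mul_gbinom_succ {a : ℝ} {n : ℕ} (ha : 0 < a) (hn : 2 * (n : ℝ) ≤ a) :
    gbinom a n ≤ 2 * (n + 1) / a * gbinom a (n + 1) := by
  rw [gbinom_succ, ← mul_assoc]
  refine le_mul_of_one_le_left (gbinom_nonneg (by linarith)) ?_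
  rw [div_mul_div_comm, one_le_div (by positivity)]
  nlinarith [mul_nonneg (by positivity : (0 : ℝ) ≤ n + 1) (sub_nonneg.mpr hn)]

lemma gbinom_sub_le {a : ℝ} {j k : ℕ} (hj : j ≤ k) (ha : 2 * (k : ℝ) ≤ a) :
    gbinom a (k - j) ≤ (2 * k / a) ^ j * gbinom a k := by
  induction j with
  | zero => simp
  | succ j ih =>
    obtain ⟨n, hn⟩ : ∃ n, k - j = n + 1 := Nat.exists_eq_succ_of_ne_zero (by omega)
    have hnk : (n : ℝ) + 1 ≤ k := by exact_mod_cast hn ▸ k.sub_le j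
    have hpos : 0 < a := by linarith [n.cast_nonneg (α := ℝ)]
    calc gbinom a (k - (j + 1)) = gbinom a n := by rw [show k - (j + 1) = n by omega]
      _ ≤ 2 * (n + 1) / a * gbinom a (n + 1) := gbinom_le_mul_gbinom_succ hpos (by linarith)
      _ ≤ 2 * k / a * gbinom a (k - j) := by
          rw [hn]
          gcongr
          exact gbinom_nonneg (by push_cast; linarith)
      _ ≤ 2 * k / a * ((2 * k / a) ^ j * gbinom a k) := by
          gcongr
          exact ih (by omega)
      _ = (2 * k / a) ^ (j + 1) * gbinom a k := by ring

lemma pow_div_factorial_le_pow {y c : ℝ} {j : ℕ} (hy : 0 ≤ y) (hc : 0 ≤ c)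
    (h : Real.exp 1 * y ≤ c * j) : y ^ j / j.factorial ≤ c ^ j := by
  have hexp : (j : ℝ) ^ j / j.factorial ≤ Real.exp 1 ^ j := by
    simpa only [Real.exp_one_pow] using Real.pow_div_factorial_le_exp (j : ℝ) j.cast_nonneg j
  refine le_of_mul_le_mul_left ?_ (pow_pos (Real.exp_pos 1) j)
  calc Real.exp 1 ^ j * (y ^ j / j.factorial) = (Real.exp 1 * y) ^ j / j.factorial := by
        rw [mul_pow, mul_div_assoc]
    _ ≤ (c * j) ^ j / j.factorial := by gcongr
    _ = c ^ j * ((j : ℝ) ^ j / j.factorial) := by rw [mul_pow, mul_div_assoc]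
    _ ≤ c ^ j * Real.exp 1 ^ j := by gcongr
    _ = Real.exp 1 ^ j * c ^ j := mul_comm _ _

lemma gbinom_sub_mul_gbinom_le {a b : ℝ} {j k : ℕ} (ha : 2 * (k : ℝ) ≤ a) (hb : 0 ≤ b)
    (hjk : j ≤ k) (hjb : (j : ℝ) ≤ b + 1) (hj : 6 * Real.exp 1 * k * b / a ≤ j) :
    gbinom a (k - j) * gbinom b j ≤ (1 / 3) ^ j * gbinom a k := by
  have ha0 : 0 ≤ a := le_trans (by positivity) ha
  have hk : (k : ℝ) ≤ a + 1 := by linarith [k.cast_nonneg (α := ℝ)]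
  have hG : 0 ≤ gbinom a k := gbinom_nonneg hk
  calc gbinom a (k - j) * gbinom b j
      ≤ (2 * k / a) ^ j * gbinom a k * (b ^ j / j.factorial) :=
        mul_le_mul (gbinom_sub_le hjk ha) (gbinom_le_pow_div_factorial hjb) (gbinom_nonneg hjb)
          (by positivity)
    _ = (2 * k / a * b) ^ j / j.factorial * gbinom a k := by rw [mul_pow]; ring
    _ ≤ (1 / 3) ^ j * gbinom a k := by
        gcongr
        refine pow_div_factorial_le_pow (by positivity) (by norm_num) ?_
        calc Real.exp 1 * (2 * k / a * b) = 1 / 3 * (6 * Real.exp 1 * k * b / a) := by ring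
          _ ≤ 1 / 3 * j := by gcongr

lemma sum_Ico_gbinom_mul_le_half_of_le_add_one {a b : ℝ} {k m q : ℕ} (ha : 2 * (k : ℝ) ≤ a)
    (hb : 0 ≤ b) (hqk : q ≤ k) (hqb : (q : ℝ) ≤ b + 1)
    (hm : 6 * Real.exp 1 * k * b / a ≤ m + 1) :
    ∑ j ∈ Ico (m + 1) (q + 1), gbinom a (k - j) * gbinom b j ≤ 1 / 2 * gbinom a k := by
  have hk : (k : ℝ) ≤ a + 1 := by linarith [k.cast_nonneg (α := ℝ)]
  have hG : 0 ≤ gbinom a k := gbinom_nonneg hk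
  have hgeom : ∑ j ∈ Ico (m + 1) (q + 1), (1 / 3 : ℝ) ^ j ≤ 1 / 2 :=
    calc ∑ j ∈ Ico (m + 1) (q + 1), (1 / 3 : ℝ) ^ j ≤ ∑ j ∈ Ico 1 (q + 1), (1 / 3) ^ j :=
          sum_le_sum_of_subset_of_nonneg (Ico_subset_Ico_left (Nat.le_add_left 1 m))
            fun _ _ _ => by positivity
      _ ≤ (1 / 3) ^ 1 / (1 - 1 / 3) := geom_sum_Ico_le_of_lt_one (by norm_num) (by norm_num)
      _ = 1 / 2 := by norm_num
  calc ∑ j ∈ Ico (m + 1) (q + 1), gbinom a (k - j) * gbinom b j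
      ≤ ∑ j ∈ Ico (m + 1) (q + 1), (1 / 3) ^ j * gbinom a k := by
        refine sum_le_sum fun j hj => ?_
        obtain ⟨hmj, hjq⟩ := mem_Ico.mp hj
        have hjq' : (j : ℝ) ≤ q := by exact_mod_cast Nat.lt_succ_iff.mp hjq
        have hmj' : (m : ℝ) + 1 ≤ j := by exact_mod_cast hmj
        exact gbinom_sub_mul_gbinom_le ha hb (by omega) (hjq'.trans hqb) (hm.trans hmj')
    _ = (∑ j ∈ Ico (m + 1) (q + 1), (1 / 3) ^ j) * gbinom a k := (sum_mul _ _ _).symm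
    _ ≤ 1 / 2 * gbinom a k := by gcongr

lemma mul_mem_uIcc_zero {R : Type*} [Ring R] [LinearOrder R] [IsOrderedRing R] {r s u v : R}
    (hr : 0 ≤ r) (hrs : r ≤ s) (hu : u ∈ Set.uIcc 0 v) :
    r * u ∈ Set.uIcc 0 (s * v) := by
  have hs : 0 ≤ s := hr.trans hrs
  rw [Set.mem_uIcc] at hu ⊢
  obtain ⟨hu0, huv⟩ | ⟨hvu, hu0⟩ := hu
  · exact .inl ⟨mul_nonneg hr hu0, mul_le_mul hrs huv hu0 hs⟩
  · refine .inr ⟨?_, mul_nonpos_of_nonneg_of_nonpos hr hu0⟩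
    calc s * v ≤ s * u := by gcongr
      _ ≤ r * u := mul_le_mul_of_nonpos_right hrs hu0

-- Membership in `Set.uIcc 0 (-t i)` encodes an opposite sign and no larger modulus.
lemma sum_range_mem_uIcc_of_alternating {M : Type*} [AddCommGroup M] [LinearOrder M]
    [IsOrderedAddMonoid M] {t : ℕ → M} (ht : ∀ i, t (i + 1) ∈ Set.uIcc 0 (-t i)) (n : ℕ) :
    ∑ i ∈ range n, t i ∈ Set.uIcc 0 (t 0) := by
  induction n generalizing t with
  | zero => simp
  | succ n ih =>
    have htail : ∑ i ∈ range n, t (i + 1) ∈ Set.uIcc 0 (-t 0) :=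
      Set.uIcc_subset_uIcc Set.left_mem_uIcc (ht 0) (ih fun i => ht (i + 1))
    have hadd := Set.mem_image_of_mem (t 0 + ·) htail
    rwa [Set.image_const_add_uIcc, add_zero, add_neg_cancel, Set.uIcc_comm, add_comm,
      ← sum_range_succ'] at hadd

lemma gbinom_succ_mem_uIcc {b : ℝ} {j : ℕ} (hb : -1 ≤ b) (hj : b ≤ j) :
    gbinom b (j + 1) ∈ Set.uIcc 0 (-gbinom b j) := by
  have hratio : ((j : ℝ) - b) / (j + 1) ≤ 1 := by
    rw [div_le_one (by positivity)]
    linarith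
  have h := mul_mem_uIcc_zero (div_nonneg (sub_nonneg.mpr hj) (by positivity)) hratio
    (Set.right_mem_uIcc (a := 0) (b := -gbinom b j))
  rw [one_mul] at h
  convert h using 1
  rw [gbinom_succ]
  ring

lemma gbinom_succ_nonpos {b : ℝ} {j : ℕ} (hj : b ≤ j) (hjb : (j : ℝ) ≤ b + 1) :
    gbinom b (j + 1) ≤ 0 := by
  rw [gbinom_succ]
  exact mul_nonpos_of_nonpos_of_nonneg
    (div_nonpos_of_nonpos_of_nonneg (sub_nonpos.mpr hj) (by positivity)) (gbinom_nonneg hjb)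

lemma abs_gbinom_succ_le_abs {b : ℝ} {j : ℕ} (hb : -1 ≤ b) (hj : b ≤ j) :
    |gbinom b (j + 1)| ≤ |gbinom b j| := by
  simpa only [sub_zero, abs_neg] using Set.abs_sub_left_of_mem_uIcc (gbinom_succ_mem_uIcc hb hj)

lemma abs_gbinom_succ_le_half {b : ℝ} {j : ℕ} (hb : 0 ≤ b) (hj : b ≤ j) :
    |gbinom b (j + 1)| ≤ 1 / 2 := by
  induction j with
  | zero =>
    obtain rfl : b = 0 := le_antisymm (by simpa using hj) hb
    simp [gbinom]
  | succ j ih =>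
    obtain hbj | hbj := le_or_gt b j
    · exact (abs_gbinom_succ_le_abs (by linarith) hj).trans (ih hbj)
    · have hjb : ((j + 1 : ℕ) : ℝ) ≤ b + 1 := by push_cast; linarith
      have hgb : |gbinom b (j + 1)| ≤ 1 := by
        rw [abs_of_nonneg (gbinom_nonneg hjb)]
        exact gbinom_le_one hjb hj
      have hratio : |(b - (j + 1 : ℕ)) / ((j + 1 : ℕ) + 1)| ≤ 1 / 2 := by
        rw [abs_div, abs_sub_comm, abs_of_nonneg (sub_nonneg.mpr hj), abs_of_pos (by positivity),
          div_le_div_iff₀ (by positivity) two_pos]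
        push_cast
        linarith [j.cast_nonneg (α := ℝ)]
      rw [gbinom_succ, abs_mul]
      exact (mul_le_of_le_one_right (abs_nonneg _) hgb).trans hratio

lemma sum_Ico_gbinom_mul_le_max {a b : ℝ} {k p : ℕ} (ha : 2 * (k : ℝ) ≤ a + 1) (hb : -1 ≤ b)
    (hp : b ≤ p) (q : ℕ) :
    ∑ j ∈ Ico p q, gbinom a (k - j) * gbinom b j ≤ max 0 (gbinom a (k - p) * gbinom b p) := by
  have hk : (k : ℝ) ≤ a + 1 := by linarith [k.cast_nonneg (α := ℝ)]
  rw [sum_Ico_eq_sum_range]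
  refine (sum_range_mem_uIcc_of_alternating
    (t := fun i => gbinom a (k - (p + i)) * gbinom b (p + i)) (fun i => ?_) (q - p)).2
  rw [← mul_neg]
  refine mul_mem_uIcc_zero (gbinom_sub_nonneg hk _) (antitone_gbinom_sub ha (by omega))
    (gbinom_succ_mem_uIcc hb ?_)
  push_cast
  linarith [i.cast_nonneg (α := ℝ)]

lemma sum_Ico_ceil_succ_gbinom_mul_nonpos {a b : ℝ} {k : ℕ} (ha : 2 * (k : ℝ) ≤ a + 1)
    (hb : 0 ≤ b) (q : ℕ) :
    ∑ j ∈ Ico (⌈b⌉₊ + 1) q, gbinom a (k - j) * gbinom b j ≤ 0 := by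
  have hk : (k : ℝ) ≤ a + 1 := by linarith [k.cast_nonneg (α := ℝ)]
  have hceil : b ≤ ⌈b⌉₊ := Nat.le_ceil b
  refine (sum_Ico_gbinom_mul_le_max ha (by linarith) (by push_cast; linarith) q).trans
    (max_le le_rfl ?_)
  exact mul_nonpos_of_nonneg_of_nonpos (gbinom_sub_nonneg hk _)
    (gbinom_succ_nonpos hceil (Nat.ceil_lt_add_one hb).le)

lemma sum_Ico_succ_gbinom_mul_le_half_of_le {a b : ℝ} {k m : ℕ} (ha : 2 * (k : ℝ) ≤ a + 1)
    (hb : 0 ≤ b) (hm : b ≤ m) (q : ℕ) :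
    ∑ j ∈ Ico (m + 1) q, gbinom a (k - j) * gbinom b j ≤ 1 / 2 * gbinom a k := by
  have hk : (k : ℝ) ≤ a + 1 := by linarith [k.cast_nonneg (α := ℝ)]
  have hG : 0 ≤ gbinom a k := gbinom_nonneg hk
  refine (sum_Ico_gbinom_mul_le_max ha (by linarith) (by push_cast; linarith) q).trans
    (max_le (by positivity) ?_)
  calc gbinom a (k - (m + 1)) * gbinom b (m + 1) ≤ gbinom a (k - (m + 1)) * (1 / 2) :=
        mul_le_mul_of_nonneg_left ((le_abs_self _).trans (abs_gbinom_succ_le_half hb hm))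
          (gbinom_sub_nonneg hk _)
    _ ≤ gbinom a k * (1 / 2) := by
        gcongr
        exact antitone_gbinom_sub ha (Nat.zero_le (m + 1))
    _ = 1 / 2 * gbinom a k := mul_comm _ _

lemma sum_Ico_succ_gbinom_mul_le_half {a b : ℝ} {k m : ℕ} (ha : 2 * (k : ℝ) ≤ a) (hb : 0 ≤ b)
    (hm : 6 * Real.exp 1 * k * b / a ≤ m + 1) :
    ∑ j ∈ Ico (m + 1) (k + 1), gbinom a (k - j) * gbinom b j ≤ 1 / 2 * gbinom a k := by
  have ha' : 2 * (k : ℝ) ≤ a + 1 := by linarith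
  have hceil : (⌈b⌉₊ : ℝ) ≤ b + 1 := (Nat.ceil_lt_add_one hb).le
  obtain hbm | hmb := le_or_gt b m
  · exact sum_Ico_succ_gbinom_mul_le_half_of_le ha' hb hbm (k + 1)
  obtain hk | hk := le_total k ⌈b⌉₊
  · exact sum_Ico_gbinom_mul_le_half_of_le_add_one ha hb le_rfl
      ((Nat.cast_le.mpr hk).trans hceil) hm
  rw [← sum_Ico_consecutive _ (Nat.succ_le_succ (Nat.lt_ceil.mpr hmb).le) (Nat.succ_le_succ hk)]
  linarith [sum_Ico_gbinom_mul_le_half_of_le_add_one ha hb hk hceil hm,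
    sum_Ico_ceil_succ_gbinom_mul_nonpos ha' hb (k + 1)]

lemma filter_not_natCast_le_range {L : ℝ} (hL : 0 ≤ L) (n : ℕ) :
    {j ∈ range n | ¬ ((j : ℕ) : ℝ) ≤ L} = Ico (⌊L⌋₊ + 1) n := by
  ext j
  rw [mem_filter, mem_range, mem_Ico, not_le, ← Nat.floor_lt hL, Nat.succ_le_iff, and_comm]

theorem sum_head_estimate (k : ℕ) (a b : ℝ) (ha : 2 * (k : ℝ) ≤ a) (hb : 0 ≤ b) :
    (1 / 2) * gbinom (a + b) k ≤
      ∑ j ∈ (Finset.range (k + 1)).filter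
          (fun j : ℕ => (j : ℝ) ≤ 6 * Real.exp 1 * (k : ℝ) * b / a),
        gbinom a (k - j) * gbinom b j := by
  have ha0 : 0 ≤ a := le_trans (by positivity) ha
  have hL : 0 ≤ 6 * Real.exp 1 * k * b / a := by positivity
  have hsplit := sum_filter_add_sum_filter_not (range (k + 1))
    (fun j : ℕ => (j : ℝ) ≤ 6 * Real.exp 1 * k * b / a) fun j => gbinom a (k - j) * gbinom b j
  rw [← gbinom_add, filter_not_natCast_le_range hL] at hsplit
  have htail := sum_Ico_succ_gbinom_mul_le_half ha hb (Nat.lt_floor_add_one _).le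
  have hmono : gbinom a k ≤ gbinom (a + b) k := gbinom_le_gbinom_left (by linarith) (by linarith)
  linarith
end
end

section
/- For every k ∈ ℕ the function Z_k is discrete harmonic: for all (x,y) ∈ ℝ², Z_k(x+1,y) + Z_k(x−1,y) + Z_k(x,y+1) + Z_k(x,y−1) = 4·Z_k(x,y). In particular the restriction of Z_k to ℤ² is harmonic for the discrete Laplacian (Δu)(p) := (1/4)·Σ_{s∈S} (u(p+s) − u(p)) with S := {(1,0),(-1,0),(0,1),(0,-1)}. -/
open Finset

noncomputable section

/-- The generating set `S = {(1,0),(-1,0),(0,1),(0,-1)}` of ℤ². -/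
def Sfin : Finset (ℤ × ℤ) := {(1,0), (-1,0), (0,1), (0,-1)}

/-- `F_k(x) = binom(x + (k-1)/2, k)`, a discretization of `x^k/k!`. -/
noncomputable def F (k : ℕ) (x : ℝ) : ℝ := gbinom (x + ((k : ℝ) - 1) / 2) k

/-- `Z_k(x,y) = Σ_{l=0}^k i^l F_{k-l}(x) F_l(y)`, a harmonic discretization of `z^k/k!`. -/
noncomputable def Z (k : ℕ) (x y : ℝ) : ℂ :=
  ∑ l ∈ Finset.range (k + 1), Complex.I ^ l * (F (k - l) x : ℂ) * (F l y : ℂ)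

/-- The discrete Laplacian on ℤ². -/
noncomputable def lap2 (u : ℤ × ℤ → ℂ) : ℤ × ℤ → ℂ :=
  fun x => (4 : ℂ)⁻¹ * ∑ s ∈ Sfin, (u (x + s) - u x)

/-!
Two steps of the half-step difference `F (k + 1) (x + 1/2) - F (k + 1) (x - 1/2) = F k x` show that
the generating series `𝓕 x = ∑ F k x tᵏ` satisfies `𝓕 (x + 1) + 𝓕 (x - 1) = (2 + t²) 𝓕 x`.
Now `Z k x y` is the coefficient of `tᵏ` in `𝓕 x (t) * 𝓕 y (i t)`, so summing over the four
neighbours multiplies this series by `(2 + t²) + (2 + (i t)²) = 4`.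
-/

open PowerSeries

lemma choose_eq_prod_range_div_factorial {K : Type*} [Field K] [CharZero K] (x : K) (k : ℕ) :
    Ring.choose x k = (∏ j ∈ Finset.range k, (x - j)) / k.factorial := by
  rw [Ring.choose_eq_smul, ← Polynomial.aeval_eq_smeval, ← Polynomial.eval_map_algebraMap,
    descPochhammer_map, descPochhammer_eval_eq_prod_range, smul_eq_mul, inv_mul_eq_div]

lemma gbinom_eq_choose (x : ℝ) (k : ℕ) : gbinom x k = Ring.choose x k :=
  (choose_eq_prod_range_div_factorial x k).symm

lemma gbinom_add_one_succ (x : ℝ) (k : ℕ) :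
    gbinom (x + 1) (k + 1) = gbinom x k + gbinom x (k + 1) := by
  simp only [gbinom_eq_choose, Ring.choose_succ_succ]

lemma F_zero (x : ℝ) : F 0 x = 1 := by
  simp [F, gbinom]

lemma F_succ_add_half_sub_F_succ_sub_half (k : ℕ) (x : ℝ) :
    F (k + 1) (x + 1 / 2) - F (k + 1) (x - 1 / 2) = F k x := by
  have hright : x + 1 / 2 + (((k + 1 : ℕ) : ℝ) - 1) / 2 = x + ((k : ℝ) - 1) / 2 + 1 := by
    push_cast; ring
  have hleft : x - 1 / 2 + (((k + 1 : ℕ) : ℝ) - 1) / 2 = x + ((k : ℝ) - 1) / 2 := by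
    push_cast; ring
  simp only [F]
  rw [hright, hleft, gbinom_add_one_succ, add_sub_cancel_right]

/-- The generating series `∑ F k x tᵏ` of the polynomials `F k`, evaluated at `x`; its coefficients
are taken in `ℂ` so that the variable can be rescaled by `i`. -/
def FSeries (x : ℝ) : ℂ⟦X⟧ := PowerSeries.mk fun k => (F k x : ℂ)

lemma FSeries_add_half_sub_FSeries_sub_half (x : ℝ) :
    FSeries (x + 1 / 2) - FSeries (x - 1 / 2) = X * FSeries x := by
  ext (_ | k)
  · simp [FSeries, F_zero]
  · simp only [FSeries, map_sub, coeff_mk, coeff_succ_X_mul]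
    exact_mod_cast F_succ_add_half_sub_F_succ_sub_half k x

lemma FSeries_add_one_add_FSeries_sub_one (x : ℝ) :
    FSeries (x + 1) + FSeries (x - 1) = (2 + X ^ 2) * FSeries x := by
  have hcenter := FSeries_add_half_sub_FSeries_sub_half x
  have hright := FSeries_add_half_sub_FSeries_sub_half (x + 1 / 2)
  have hleft := FSeries_add_half_sub_FSeries_sub_half (x - 1 / 2)
  rw [add_assoc, add_halves, add_sub_cancel_right] at hright
  rw [sub_add_cancel, sub_sub, add_halves] at hleft
  linear_combination hright - hleft + X * hcenter

lemma Z_eq_coeff (k : ℕ) (x y : ℝ) :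
    Z k x y = coeff k (FSeries x * rescale Complex.I (FSeries y)) := by
  rw [mul_comm, coeff_mul, Finset.Nat.sum_antidiagonal_eq_sum_range_succ_mk, Z]
  refine Finset.sum_congr rfl fun l _ => ?_
  simp only [FSeries, coeff_rescale, coeff_mk]
  ring

lemma rescale_X_sq_of_sq_eq_neg_one {R : Type*} [CommRing R] {i : R} (hi : i ^ 2 = -1) :
    rescale i (X ^ 2 : R⟦X⟧) = -X ^ 2 := by
  rw [map_pow, rescale_X, mul_pow, ← map_pow, hi, map_neg, map_one, neg_one_mul]

lemma mul_map_sum_neighbors {R S : Type*} [Semiring R] [CommRing S] (φ : R →+* S)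
    {c g g₁ g₂ : R} {d f f₁ f₂ : S} (hφ : φ c = -d)
    (hf : f₁ + f₂ = (2 + d) * f) (hg : g₁ + g₂ = (2 + c) * g) :
    f₁ * φ g + f₂ * φ g + f * φ g₁ + f * φ g₂ = 4 * (f * φ g) := by
  have hφg : φ g₁ + φ g₂ = (2 - d) * φ g := by
    rw [← map_add, hg, map_mul, map_add, hφ, map_ofNat, sub_eq_add_neg]
  linear_combination φ g * hf + f * hφg

lemma Z_sum_neighbors (k : ℕ) (x y : ℝ) :
    Z k (x + 1) y + Z k (x - 1) y + Z k x (y + 1) + Z k x (y - 1) = 4 * Z k x y := by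
  have hseries := congrArg (coeff k) <| mul_map_sum_neighbors (rescale Complex.I)
    (rescale_X_sq_of_sq_eq_neg_one Complex.I_sq)
    (FSeries_add_one_add_FSeries_sub_one x) (FSeries_add_one_add_FSeries_sub_one y)
  simpa only [Z_eq_coeff, map_add, ← map_ofNat (C (R := ℂ)) 4, coeff_C_mul] using hseries

lemma sum_Sfin {M : Type*} [AddCommMonoid M] (f : ℤ × ℤ → M) :
    ∑ s ∈ Sfin, f s = f (1, 0) + (f (-1, 0) + (f (0, 1) + f (0, -1))) := by
  simp [Sfin]

lemma lap2_apply (u : ℤ × ℤ → ℂ) (a b : ℤ) :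
    lap2 u (a, b) =
      4⁻¹ * (u (a + 1, b) + u (a - 1, b) + u (a, b + 1) + u (a, b - 1) - 4 * u (a, b)) := by
  simp only [lap2, sum_Sfin, Prod.mk_add_mk, add_zero, ← sub_eq_add_neg]
  ring

theorem Z_harmonic (k : ℕ) :
    (∀ x y : ℝ, Z k (x + 1) y + Z k (x - 1) y + Z k x (y + 1) + Z k x (y - 1) = 4 * Z k x y) ∧
    lap2 (fun p : ℤ × ℤ => Z k p.1 p.2) = 0 := by
  refine ⟨Z_sum_neighbors k, funext fun ⟨a, b⟩ => ?_⟩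
  rw [lap2_apply]
  push_cast
  rw [Z_sum_neighbors, sub_self, mul_zero, Pi.zero_apply]
end
end

section
/- Let f : ℤ² → ℂ be harmonic. Then for every l ∈ ℕ one has (Δ^l |f|²)(0) = 4^{-l}·Σ_{(s_1,…,s_l)∈S^l} |(∂_{s_1}∘⋯∘∂_{s_l} f)(0)|², where |f|² : ℤ² → ℝ is the function x ↦ |f(x)|² and Δ^l is the l-th iterate of the discrete Laplacian. -/
open Finset

noncomputable section

/-- The discrete Laplacian on ℤ² for real-valued functions. -/
noncomputable def lap2R (u : ℤ × ℤ → ℝ) : ℤ × ℤ → ℝ :=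
  fun x => (4 : ℝ)⁻¹ * ∑ s ∈ Sfin, (u (x + s) - u x)

/-- The partial difference `(∂_s u)(x) = u(x+s) - u(x)`. -/
def pd (s : ℤ × ℤ) (u : ℤ × ℤ → ℂ) : ℤ × ℤ → ℂ := fun x => u (x + s) - u x

/-!
With `∂_s = Δ_[s]` and `Δ = ∑ s, w s • ∂_s`, expanding `‖f (x + s)‖² = ‖f x + ∂_s f x‖²` gives
`Δ ‖f‖² = 2 ⟪f, Δ f⟫ + ∑ s, w s • ‖∂_s f‖²`, whose first term vanishes for harmonic `f`. Since
translations commute, every `∂_s f` is again harmonic, so the identity can be iterated.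
-/

open scoped fwdDiff

theorem sum_piFinset_snoc {n : ℕ} {α : Fin (n + 1) → Type*} {A : Type*} [AddCommMonoid A]
    (S : ∀ i, Finset (α i)) (F : (∀ i, α i) → A) :
    ∑ s ∈ Fintype.piFinset S, F s =
      ∑ t ∈ S (Fin.last n), ∑ s ∈ Fintype.piFinset (Fin.init S), F (Fin.snoc s t) := by
  have h := filter_piFinset_eq_map_snocEquiv S fun _ => True
  simp only [filter_true] at h
  rw [h, sum_map, sum_product]
  rfl

section WeightedLaplacian

variable {M : Type*} [AddCommMonoid M]

theorem fwdDiff_comm {E : Type*} [AddCommGroup E] (s t : M) (u : M → E) :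
    Δ_[s] (Δ_[t] u) = Δ_[t] (Δ_[s] u) := by
  ext x
  simp only [fwdDiff, add_right_comm x t s]
  abel

section Module

variable {R E : Type*} [CommRing R] [AddCommGroup E] [Module R E]

/-- The Laplacian `∑ s ∈ S, w s • ∂_s` on functions on a commutative monoid, with finite step set
`S` and weights `w`; only the values of `w` on `S` matter. The normalized Laplacian on `ℤ²` has
`w = 1/4` on the four unit steps. -/
def weightedLaplacian (S : Finset M) (w : M → R) : Module.End R (M → E) where
  toFun u := ∑ s ∈ S, w s • Δ_[s] u
  map_add' u v := by simp only [fwdDiff_add, smul_add, sum_add_distrib]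
  map_smul' c u := by simp only [fwdDiff_const_smul, smul_comm _ c, smul_sum, RingHom.id_apply]

variable (S : Finset M) (w : M → R) (u : M → E)

theorem weightedLaplacian_apply : weightedLaplacian S w u = ∑ s ∈ S, w s • Δ_[s] u := rfl

theorem weightedLaplacian_apply_apply (x : M) :
    weightedLaplacian S w u x = ∑ s ∈ S, w s • Δ_[s] u x := by
  simp only [weightedLaplacian_apply, Finset.sum_apply, Pi.smul_apply]

theorem weightedLaplacian_fwdDiff (t : M) :
    weightedLaplacian S w (Δ_[t] u) = Δ_[t] (weightedLaplacian S w u) := by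
  simp only [weightedLaplacian_apply, fwdDiff_finsetSum, fwdDiff_const_smul, fwdDiff_comm t]

end Module

section InnerProductSpace

open scoped RealInnerProductSpace

variable {E : Type*} [SeminormedAddCommGroup E] [InnerProductSpace ℝ E]

theorem fwdDiff_norm_sq (s : M) (f : M → E) (x : M) :
    Δ_[s] (fun y => ‖f y‖ ^ 2) x = 2 * ⟪f x, Δ_[s] f x⟫ + ‖Δ_[s] f x‖ ^ 2 := by
  have h := norm_add_sq_real (f x) (Δ_[s] f x)
  rw [fwdDiff, add_sub_cancel] at h
  rw [fwdDiff, h, fwdDiff]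
  ring

theorem weightedLaplacian_norm_sq (S : Finset M) (w : M → ℝ) (f : M → E) (x : M) :
    weightedLaplacian S w (fun y => ‖f y‖ ^ 2) x =
      2 * ⟪f x, weightedLaplacian S w f x⟫ + ∑ s ∈ S, w s * ‖Δ_[s] f x‖ ^ 2 := by
  simp only [weightedLaplacian_apply_apply, fwdDiff_norm_sq, inner_sum, inner_smul_right, mul_sum,
    ← sum_add_distrib, smul_eq_mul]
  exact sum_congr rfl fun s _ => by ring

theorem weightedLaplacian_norm_sq_of_harmonic {S : Finset M} {w : M → ℝ} {f : M → E}
    (hf : weightedLaplacian S w f = 0) :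
    weightedLaplacian S w (fun x => ‖f x‖ ^ 2) = ∑ s ∈ S, w s • fun x => ‖Δ_[s] f x‖ ^ 2 := by
  ext x
  simp [weightedLaplacian_norm_sq, hf]

theorem laplace_powers_harmonic_fcn_general {S : Finset M} {w : M → ℝ} {f : M → E}
    (hf : weightedLaplacian S w f = 0) (l : ℕ) (x : M) :
    (weightedLaplacian S w ^ l) (fun y => ‖f y‖ ^ 2) x =
      ∑ s ∈ Fintype.piFinset (fun _ : Fin l => S),
        (∏ i, w (s i)) * ‖(List.ofFn s).foldr fwdDiff f x‖ ^ 2 := by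
  induction l generalizing f with
  | zero => simp
  | succ l ih =>
    have harmonic_fwdDiff (t : M) : weightedLaplacian S w (Δ_[t] f) = 0 := by
      rw [weightedLaplacian_fwdDiff, hf]
      exact fwdDiff_const t 0
    calc (weightedLaplacian S w ^ (l + 1)) (fun y => ‖f y‖ ^ 2) x
        = ∑ t ∈ S, w t * (weightedLaplacian S w ^ l) (fun y => ‖Δ_[t] f y‖ ^ 2) x := by
          rw [pow_succ, Module.End.mul_apply, weightedLaplacian_norm_sq_of_harmonic hf]
          simp only [map_sum, map_smul, Finset.sum_apply, Pi.smul_apply, smul_eq_mul]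
      _ = ∑ t ∈ S, ∑ s ∈ Fintype.piFinset (fun _ : Fin l => S),
            w t * ((∏ i, w (s i)) * ‖(List.ofFn s).foldr fwdDiff (Δ_[t] f) x‖ ^ 2) := by
          simp only [ih (harmonic_fwdDiff _), mul_sum]
      _ = ∑ s ∈ Fintype.piFinset (fun _ : Fin (l + 1) => S),
            (∏ i, w (s i)) * ‖(List.ofFn s).foldr fwdDiff f x‖ ^ 2 := by
          rw [sum_piFinset_snoc]
          refine sum_congr rfl fun t _ => sum_congr rfl fun s _ => ?_
          simp only [Fin.prod_univ_castSucc, List.ofFn_succ_last, List.foldr_append,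
            List.foldr_cons, List.foldr_nil, Fin.snoc_castSucc, Fin.snoc_last]
          ring

end InnerProductSpace

end WeightedLaplacian

theorem pd_eq_fwdDiff : pd = fwdDiff := rfl

theorem lap2_eq_weightedLaplacian : lap2 = weightedLaplacian Sfin fun _ => (4 : ℝ)⁻¹ := by
  ext u x
  simp [lap2, weightedLaplacian_apply_apply, fwdDiff, mul_sum, -sum_sub_distrib]

theorem lap2R_eq_weightedLaplacian : lap2R = weightedLaplacian Sfin fun _ => (4 : ℝ)⁻¹ := by
  ext u x
  simp only [lap2R, weightedLaplacian_apply_apply, fwdDiff, smul_eq_mul, mul_sum]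

theorem laplace_powers_harmonic_fcn (f : ℤ × ℤ → ℂ) (hf : lap2 f = 0) (l : ℕ) :
    (lap2R^[l] (fun x => ‖f x‖ ^ 2)) 0 =
      (4 : ℝ)⁻¹ ^ l * ∑ s ∈ Fintype.piFinset (fun _ : Fin l => Sfin),
        ‖((List.ofFn s).foldr pd f) 0‖ ^ 2 := by
  rw [lap2_eq_weightedLaplacian] at hf
  simp [lap2R_eq_weightedLaplacian, pd_eq_fwdDiff, ← Module.End.coe_pow,
    laplace_powers_harmonic_fcn_general hf, mul_sum]
end
end
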